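/- Let ρ₂ be the state obtained from the checkerboard construction with parameters a=b=c=f=j=m=p=r=1, n=0, e=−1, q=s=𝐢, g=h=−𝐢, d=1+𝐢, i=−1−𝐢, k=l=−1+𝐢 (where 𝐢 is the imaginary unit; here N = 21). Then det(ρ₂^Γ) = 2·11·19/(3⁷·7⁹) (in particular ρ₂^Γ is nonsingular), and ρ₂^Γ, which is a Hermitian 9×9 matrix, has exactly two negative eigenvalues (counted with multiplicity). -/

import Mathlib

open Complex ComplexConjugate
open scoped ComplexOrder

noncomputable section

/-- The "odd" checkerboard vector with entries at positions (0,0),(2,0),(1,1),(0,2),(2,2). -/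
def oddVec (a b c d e : ℂ) : Fin 3 × Fin 3 → ℂ := fun u =>
  if u = (0, 0) then a else if u = (2, 0) then b else if u = (1, 1) then c
  else if u = (0, 2) then d else if u = (2, 2) then e else 0

/-- The "even" checkerboard vector with entries at positions (1,0),(0,1),(2,1),(1,2). -/
def evenVec (f g h i : ℂ) : Fin 3 × Fin 3 → ℂ := fun u =>
  if u = (1, 0) then f else if u = (0, 1) then g else if u = (2, 1) then h
  else if u = (1, 2) then i else 0

/-- Tensor product of two vectors of ℂ³, as a function on Fin 3 × Fin 3. -/
def tp (x y : Fin 3 → ℂ) : Fin 3 × Fin 3 → ℂ := fun u => x u.1 * y u.2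

/-- σ = Σ_{t=1}^4 v_t v_t†, a 9×9 complex matrix. -/
def sigmaM (a b c d e f g h i j k l m n p q r s : ℂ) :
    Matrix (Fin 3 × Fin 3) (Fin 3 × Fin 3) ℂ :=
  Matrix.of fun u w =>
    oddVec a b c d e u * conj (oddVec a b c d e w)
      + evenVec f g h i u * conj (evenVec f g h i w)
      + oddVec j k l m n u * conj (oddVec j k l m n w)
      + evenVec p q r s u * conj (evenVec p q r s w)

/-- N = Σ_{t=1}^4 ‖v_t‖². -/
def Nval (a b c d e f g h i j k l m n p q r s : ℂ) : ℝ :=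
  ∑ u : Fin 3 × Fin 3,
    (‖oddVec a b c d e u‖ ^ 2 + ‖evenVec f g h i u‖ ^ 2
      + ‖oddVec j k l m n u‖ ^ 2 + ‖evenVec p q r s u‖ ^ 2)

/-- ρ = (1/N) Σ_{t=1}^4 v_t v_t†. -/
def rhoM (a b c d e f g h i j k l m n p q r s : ℂ) :
    Matrix (Fin 3 × Fin 3) (Fin 3 × Fin 3) ℂ :=
  ((Nval a b c d e f g h i j k l m n p q r s : ℂ))⁻¹
    • sigmaM a b c d e f g h i j k l m n p q r s

/-- The partial transpose: (M^Γ)_{(i,j),(k,l)} = M_{(i,l),(k,j)}. -/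
def ptrans (M : Matrix (Fin 3 × Fin 3) (Fin 3 × Fin 3) ℂ) :
    Matrix (Fin 3 × Fin 3) (Fin 3 × Fin 3) ℂ :=
  Matrix.of fun u w => M (u.1, w.2) (w.1, u.2)

/-- The state ρ₂: parameters a=b=c=f=j=m=p=r=1, n=0, e=−1, q=s=𝐢, g=h=−𝐢,
d=1+𝐢, i=−1−𝐢, k=l=−1+𝐢. -/
def rho2 : Matrix (Fin 3 × Fin 3) (Fin 3 × Fin 3) ℂ :=
  rhoM 1 1 1 (1 + I) (-1) 1 (-I) (-I) (-1 - I) 1 (-1 + I) (-1 + I) 1 0 1 I 1 I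

def idx9 : Fin 9 → Fin 3 × Fin 3 :=
  ![(0, 0), (0, 1), (0, 2), (1, 0), (1, 1), (1, 2), (2, 0), (2, 1), (2, 2)]

def e9 : Fin 9 ≃ Fin 3 × Fin 3 := Equiv.ofBijective idx9 (by decide)

/-- `21` times the partial transpose. -/
def M9 : Matrix (Fin 9) (Fin 9) ℂ :=
  !![2, 0, 2 + (1) * I, 0, 0, 0, (-1) * I, 0, 0;
    0, 2, 0, (-1) * I, 0, 0, 0, 1 + (1) * I, 0;
    2 + (-1) * I, 0, 3, 0, 2 + (1) * I, 0, -1, 0, -1 + (-1) * I;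
    0, (1) * I, 0, 2, 0, -1, 0, 3, 0;
    0, 0, 2 + (-1) * I, 0, 3, 0, 1 + (1) * I, 0, 1;
    0, 0, 0, -1, 0, 3, 0, -1, 0;
    (1) * I, 0, -1, 0, 1 + (-1) * I, 0, 3, 0, -1;
    0, 1 + (-1) * I, 0, 3, 0, -1, 0, 2, 0;
    0, 0, -1 + (1) * I, 0, 1, 0, -1, 0, 1]

/-- The unit lower triangular factor. -/
def L9 : Matrix (Fin 9) (Fin 9) ℂ :=
  !![1, 0, 0, 0, 0, 0, 0, 0, 0;
    0, 1, 0, 0, 0, 0, 0, 0, 0;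
    1 + (-1/2) * I, 0, 1, 0, 0, 0, 0, 0, 0;
    0, (1/2) * I, 0, 1, 0, 0, 0, 0, 0;
    0, 0, 4 + (-2) * I, 0, 1, 0, 0, 0, 0;
    0, 0, 0, -2/3, 0, 1, 0, 0, 0;
    (1/2) * I, 0, -1 + (-2) * I, 0, -1/7 + (-4/7) * I, 0, 1, 0, 0;
    0, 1/2 + (-1/2) * I, 0, 7/3 + (1/3) * I, 0, 4/7 + (1/7) * I, 0, 1, 0;
    0, 0, -2 + (2) * I, 0, -1 + (2/7) * I, 0, -1/17 + (-9/17) * I, 0, 1]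

/-- The pivots. -/
def D9 : Fin 9 → ℝ := ![2, 2, 1/2, 3/2, -7, 7/3, 17/7, -57/7, 66/17]

lemma neg_card_le {m n : Type*} [Fintype m] [Fintype n] [DecidableEq m] [DecidableEq n]
    (e : m → ℝ) (d : n → ℝ) (F : Matrix m n ℂ)
    (h : Matrix.diagonal (fun i => (e i : ℂ))
      = F * Matrix.diagonal (fun i => (d i : ℂ)) * F.conjTranspose) :
    Fintype.card {i // e i < 0} ≤ Fintype.card {j // d j < 0} := by
  classical
  by_contra hlt
  push Not at hlt
  let ext : ({i // e i < 0} → ℂ) →ₗ[ℂ] (m → ℂ) :=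
    { toFun := fun y i => if hi : e i < 0 then y ⟨i, hi⟩ else 0
      map_add' := by
        intro x y; ext i; by_cases hi : e i < 0 <;> simp [hi]
      map_smul' := by
        intro c y; ext i; by_cases hi : e i < 0 <;> simp [hi] }
  let res : (n → ℂ) →ₗ[ℂ] ({j // d j < 0} → ℂ) :=
    LinearMap.funLeft ℂ ℂ (fun j : {j // d j < 0} => j.1)
  let T := res ∘ₗ (Matrix.mulVecLin F.conjTranspose) ∘ₗ ext
  have hk : LinearMap.ker T ≠ ⊥ := by
    apply LinearMap.ker_ne_bot_of_finrank_lt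
    simpa using hlt
  obtain ⟨y, hy, hy0⟩ := (Submodule.ne_bot_iff _).1 hk
  have hTy : ∀ j, d j < 0 → (F.conjTranspose.mulVec (ext y)) j = 0 := by
    intro j hj
    exact congrFun (LinearMap.mem_ker.1 hy) ⟨j, hj⟩
  set x := ext y with hx
  set z := F.conjTranspose.mulVec x with hz
  have key : star x ⬝ᵥ (Matrix.diagonal (fun i => (e i : ℂ))).mulVec x
      = star z ⬝ᵥ (Matrix.diagonal (fun i => (d i : ℂ))).mulVec z := by
    rw [h, ← Matrix.mulVec_mulVec, ← Matrix.mulVec_mulVec, ← hz, Matrix.dotProduct_mulVec, hz,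
      Matrix.star_mulVec, Matrix.conjTranspose_conjTranspose]
  have form : ∀ {k : Type _} [Fintype k] [DecidableEq k] (w : k → ℝ) (x : k → ℂ),
      star x ⬝ᵥ (Matrix.diagonal (fun i => (w i : ℂ))).mulVec x
        = ((∑ i, w i * Complex.normSq (x i) : ℝ) : ℂ) := by
    intro k _ _ w x
    simp only [dotProduct, Matrix.mulVec_diagonal, Pi.star_apply]
    push_cast
    refine Finset.sum_congr rfl fun i _ => ?_
    rw [Complex.normSq_eq_conj_mul_self]
    simp only [RCLike.star_def]
    ring
  have form2 : star z ⬝ᵥ (Matrix.diagonal (fun i => (d i : ℂ))).mulVec z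
        = ((∑ i, d i * Complex.normSq (z i) : ℝ) : ℂ) := by
    simp only [dotProduct, Matrix.mulVec_diagonal, Pi.star_apply]
    push_cast
    refine Finset.sum_congr rfl fun i _ => ?_
    rw [Complex.normSq_eq_conj_mul_self]
    simp only [RCLike.star_def]
    ring
  rw [form, form2] at key
  have key' := Complex.ofReal_injective key
  have h1 : 0 ≤ ∑ i, d i * Complex.normSq (z i) := by
    refine Finset.sum_nonneg fun j _ => ?_
    by_cases hj : d j < 0
    · rw [hTy j hj]; simp
    · exact mul_nonneg (not_lt.1 hj) (Complex.normSq_nonneg _)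
  have h2 : ∑ i, e i * Complex.normSq (x i) < 0 := by
    obtain ⟨i, hi⟩ := Function.ne_iff.1 hy0
    refine Finset.sum_neg' (fun j _ => ?_) ⟨i.1, Finset.mem_univ _, ?_⟩
    · by_cases hj : e j < 0
      · exact mul_nonpos_of_nonpos_of_nonneg hj.le (Complex.normSq_nonneg _)
      · have : x j = 0 := by simp [hx, ext, hj]
        rw [this]; simp
    · have : x i.1 = y i := by simp [hx, ext, i.2]
      rw [this]
      exact mul_neg_of_neg_of_pos i.2 (Complex.normSq_pos.2 hi)
  linarith

set_option maxHeartbeats 4000000 in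
lemma L9_det : L9.det = 1 := by
  rw [Matrix.det_of_isLowerTriangular]
  · simp [L9, Fin.prod_univ_succ]
  · intro i j hij
    have hij' : i < j := hij
    revert hij'
    fin_cases i <;> fin_cases j <;> simp [L9]

set_option maxHeartbeats 4000000 in
lemma M9_eq : L9 * Matrix.diagonal (fun i => (D9 i : ℂ)) * L9.conjTranspose = M9 := by
  ext i j
  rw [Matrix.mul_apply]
  simp only [Matrix.mul_diagonal, Matrix.conjTranspose_apply, RCLike.star_def]
  fin_cases i <;> fin_cases j <;>
    simp [L9, M9, D9, Fin.sum_univ_succ, Complex.ext_iff] <;> norm_num [Complex.conj_ofNat]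

lemma Nval_eq : Nval 1 1 1 (1 + I) (-1) 1 (-I) (-I) (-1 - I) 1 (-1 + I) (-1 + I) 1 0 1 I 1 I
    = 21 := by
  simp only [Nval, ← Complex.normSq_eq_norm_sq, Fintype.sum_prod_type, Fin.sum_univ_three]
  simp [oddVec, evenVec, Complex.normSq_apply]
  norm_num

set_option maxHeartbeats 4000000 in
lemma sub_eq : (ptrans rho2).submatrix e9 e9 = (21 : ℂ)⁻¹ • M9 := by
  ext i j
  simp only [rho2, rhoM, Nval_eq, ptrans, Matrix.submatrix_apply, Matrix.of_apply,
    Matrix.smul_apply, e9, Equiv.ofBijective_apply]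
  push_cast
  congr 1
  fin_cases i <;> fin_cases j <;>
    simp [idx9, M9, sigmaM, oddVec, evenVec, Complex.ext_iff] <;> norm_num

def d9 : Fin 9 → ℝ := fun i => D9 i / 21

lemma sub_eq2 : (ptrans rho2).submatrix e9 e9
    = L9 * Matrix.diagonal (fun i => (d9 i : ℂ)) * L9.conjTranspose := by
  have : Matrix.diagonal (fun i => (d9 i : ℂ))
      = (21 : ℂ)⁻¹ • Matrix.diagonal (fun i => (D9 i : ℂ)) := by
    rw [← Matrix.diagonal_smul]
    congr 1
    ext i
    simp [d9]
    ring
  rw [sub_eq, ← M9_eq, this]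
  simp

lemma d9_card : Fintype.card {i // d9 i < 0} = 2 := by
  have h : ∀ i, d9 i < 0 ↔ (i = 4 ∨ i = 7) := by
    intro i
    fin_cases i <;> simp [d9, D9] <;> norm_num
  rw [Fintype.card_congr (Equiv.subtypeEquivRight h)]
  decide

lemma herm : (ptrans rho2).IsHermitian := by
  have : ((ptrans rho2).submatrix e9 e9).IsHermitian := by
    rw [sub_eq2]
    apply Matrix.isHermitian_mul_mul_conjTranspose
    rw [Matrix.isHermitian_diagonal_iff]
    intro i
    simp [IsSelfAdjoint]
  exact (Matrix.isHermitian_submatrix_equiv e9).1 this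

theorem stmt13 :
    (ptrans rho2).det = ((2 * 11 * 19 / (3 ^ 7 * 7 ^ 9) : ℂ)) ∧
    ∃ hH : (ptrans rho2).IsHermitian,
      {w : Fin 3 × Fin 3 | hH.eigenvalues w < 0}.ncard = 2 := by
  constructor
  · rw [← Matrix.det_submatrix_equiv_self e9, sub_eq2, Matrix.det_mul, Matrix.det_mul,
      Matrix.det_conjTranspose, L9_det, Matrix.det_diagonal]
    simp [d9, D9, Fin.prod_univ_succ]
    norm_num
  · refine ⟨herm, ?_⟩
    set A := ptrans rho2 with hA
    let C : Matrix (Fin 3 × Fin 3) (Fin 9) ℂ := L9.submatrix e9.symm id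
    let Ci : Matrix (Fin 9) (Fin 3 × Fin 3) ℂ := L9⁻¹.submatrix id e9.symm
    have hdet : IsUnit L9.det := by rw [L9_det]; exact isUnit_one
    have hC : A = C * Matrix.diagonal (fun i => (d9 i : ℂ)) * C.conjTranspose := by
      have h := congrArg (fun X => X.submatrix e9.symm e9.symm) sub_eq2
      simp only [Matrix.submatrix_submatrix, Equiv.self_comp_symm, Matrix.submatrix_id_id] at h
      rw [hA, h]
      rfl
    have hCi : Ci * C = 1 := by
      have : Ci * C = L9⁻¹ * L9 := by
        simp only [Ci, C, Matrix.submatrix_mul_equiv]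
        simp
      rw [this, Matrix.nonsing_inv_mul _ hdet]
    have hCi' : C.conjTranspose * Ci.conjTranspose = 1 := by
      rw [← Matrix.conjTranspose_mul, hCi, Matrix.conjTranspose_one]
    let U : Matrix (Fin 3 × Fin 3) (Fin 3 × Fin 3) ℂ := herm.eigenvectorUnitary
    have hU : U.conjTranspose * U = 1 := by
      exact Unitary.coe_star_mul_self herm.eigenvectorUnitary
    have hS : A = U * Matrix.diagonal (fun i => (herm.eigenvalues i : ℂ)) * U.conjTranspose := by
      have := herm.spectral_theorem
      rw [Unitary.conjStarAlgAut_apply] at this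
      exact this
    have h1 := neg_card_le herm.eigenvalues d9 (U.conjTranspose * C) (by
      rw [Matrix.conjTranspose_mul, Matrix.conjTranspose_conjTranspose]
      calc _ = (U.conjTranspose * U) * Matrix.diagonal (fun i => (herm.eigenvalues i : ℂ))
              * (U.conjTranspose * U) := by rw [hU]; simp
        _ = U.conjTranspose * A * U := by rw [hS]; simp only [Matrix.mul_assoc]
        _ = _ := by rw [hC]; simp only [Matrix.mul_assoc])
    have h2 := neg_card_le d9 herm.eigenvalues (Ci * U) (by
      rw [Matrix.conjTranspose_mul]
      calc _ = (Ci * C) * Matrix.diagonal (fun i => (d9 i : ℂ))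
              * (C.conjTranspose * Ci.conjTranspose) := by rw [hCi, hCi']; simp
        _ = Ci * A * Ci.conjTranspose := by rw [hC]; simp only [Matrix.mul_assoc]
        _ = _ := by rw [hS]; simp only [Matrix.mul_assoc])
    rw [d9_card] at h1 h2
    rw [← Nat.card_coe_set_eq, Nat.card_eq_fintype_card]
    exact le_antisymm h1 h2
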